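/- Let F be a bounded standard set-valued map, T > 0, and for δ ≥ 0 let Λ^δ : C([0,T], ℝ^m) ⇒ C([0,T], ℝ^m) be defined by: y ∈ Λ^δ(z) iff there is an integrable h with h(u) ∈ F^δ(z(u)) for all u ∈ [0,T] and y(τ) = z(0) + ∫_0^τ h(u) du for all τ ∈ [0,T] (with F^0 = F and Λ = Λ^0). Let (δ_n) be a positive sequence decreasing to 0 and set Λ_n := Λ^{δ_n}. Suppose there exists a compact set K ⊂ C([0,T], ℝ^m) with Λ_n(z) ⊂ K for every z ∈ K and every n, and that Fix(Λ) := {z ∈ K : z ∈ Λ(z)} is nonempty. Then for every δ > 0 there exist ε > 0 and n₀ ∈ ℕ such that for all n > n₀ and all z ∈ K: d_{[0,T]}(z, Λ_n(z)) ≤ ε implies d_{[0,T]}(z, Fix(Λ)) ≤ δ, where d_{[0,T]} is the distance induced by the uniform norm on [0,T]. -/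

import Mathlib

open MeasureTheory Filter Topology Metric Set Pointwise

noncomputable section

/-- `ℝ^m` with the Euclidean norm. -/
abbrev Euc (m : ℕ) := EuclideanSpace ℝ (Fin m)

/-- A standard set-valued map `F : ℝ^m ⇒ ℝ^m`: nonempty compact convex values,
closed graph, and linear growth. -/
def IsStandardSVM {m : ℕ} (F : Euc m → Set (Euc m)) : Prop :=
  (∀ x, (F x).Nonempty ∧ IsCompact (F x) ∧ Convex ℝ (F x)) ∧
  IsClosed {p : Euc m × Euc m | p.2 ∈ F p.1} ∧
  ∃ c > 0, ∀ x, ∀ z ∈ F x, ‖z‖ ≤ c * (1 + ‖x‖)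

/-- A solution of the differential inclusion `dx/dt ∈ F x`: an absolutely continuous
curve `z : ℝ → ℝ^m` (written as the integral of a locally integrable derivative `h`)
with `h t ∈ F (z t)` for almost every `t`. -/
def IsSolution {m : ℕ} (F : Euc m → Set (Euc m)) (z : ℝ → Euc m) : Prop :=
  Continuous z ∧ ∃ h : ℝ → Euc m,
    (∀ a b : ℝ, IntervalIntegrable h volume a b) ∧
    (∀ᵐ t ∂volume, h t ∈ F (z t)) ∧
    ∀ t : ℝ, z t = z 0 + ∫ u in (0:ℝ)..t, h u

/-- `Φ_t(x)`: the set of points reached at time `t` by solutions starting at `x`. -/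
def PhiT {m : ℕ} (F : Euc m → Set (Euc m)) (t : ℝ) (x : Euc m) : Set (Euc m) :=
  {y | ∃ z : ℝ → Euc m, IsSolution F z ∧ z 0 = x ∧ z t = y}

/-- `ω_Φ(x) = ⋂_{t ≥ 0} closure (Φ_{[t,∞)}(x))`. -/
def omegaLimitSV {m : ℕ} (F : Euc m → Set (Euc m)) (x : Euc m) : Set (Euc m) :=
  ⋂ t ∈ Ici (0:ℝ), closure {y | ∃ s ≥ t, y ∈ PhiT F s x}

/-- An attractor for the set-valued dynamical system induced by `F`: a nonempty,
compact, invariant set admitting a neighborhood `U` with `Φ_t(U) ⊆ N^ε(A)` for all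
`t` large enough. -/
def IsAttractorSV {m : ℕ} (F : Euc m → Set (Euc m)) (A : Set (Euc m)) : Prop :=
  A.Nonempty ∧ IsCompact A ∧
  (∀ x ∈ A, ∃ z : ℝ → Euc m, IsSolution F z ∧ z 0 = x ∧ Set.range z ⊆ A) ∧
  ∃ U : Set (Euc m), IsOpen U ∧ A ⊆ U ∧
    ∀ ε > 0, ∃ tε > 0, ∀ t ≥ tε, ∀ x ∈ U, PhiT F t x ⊆ Metric.thickening ε A

/-- The basin of attraction `B(A) = {x | ω_Φ(x) ⊆ A}`. -/
def basinSV {m : ℕ} (F : Euc m → Set (Euc m)) (A : Set (Euc m)) : Set (Euc m) :=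
  {x | omegaLimitSV F x ⊆ A}

/-- The limit set `L(X) = ⋂_{t ≥ 0} closure {X s : s ≥ t}` of a path. -/
def limitSet {m : ℕ} (X : ℝ → Euc m) : Set (Euc m) :=
  ⋂ t ∈ Ici (0:ℝ), closure {y | ∃ s ≥ t, X s = y}

/-- `inf_{z ∈ S_Φ} sup_{u ∈ [0,T]} ‖z u - Y u‖`. -/
def distToSol {m : ℕ} (F : Euc m → Set (Euc m)) (Y : ℝ → Euc m) (T : ℝ) : ℝ :=
  sInf {d | ∃ z : ℝ → Euc m, IsSolution F z ∧ d = ⨆ u : Icc (0:ℝ) T, ‖z u - Y u‖}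

/-- Asymptotic pseudotrajectory of the set-valued dynamical system induced by `F`. -/
def IsAPT {m : ℕ} (F : Euc m → Set (Euc m)) (X : ℝ → Euc m) : Prop :=
  ∀ T > 0, Tendsto (fun t => distToSol F (fun u => X (t + u)) T) atTop (𝓝 0)

/-- A point `p` is attainable by the process `X`: for every `t > 0` and every
neighborhood `U` of `p`, `P(∃ s ≥ t, X s ∈ U) > 0`. -/
def Attainable {m : ℕ} {Ω : Type*} [MeasurableSpace Ω] (μ : Measure Ω)
    (X : ℝ → Ω → Euc m) (p : Euc m) : Prop :=
  ∀ t > 0, ∀ U ∈ 𝓝 p, 0 < μ {ω | ∃ s ≥ t, X s ω ∈ U}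

/-- `τ_n = γ_1 + ⋯ + γ_n`. -/
def tauOf (γ : ℕ → ℝ) (n : ℕ) : ℝ := ∑ i ∈ Finset.range n, γ (i + 1)

/-- `m(t) = sup {j | τ_j ≤ t}`. -/
def mIdx (γ : ℕ → ℝ) (t : ℝ) : ℕ := sSup {j | tauOf γ j ≤ t}

/-- Hypothesis H1: there is `w t α T` decreasing to `0` in `t` dominating the
conditional probability that `sup_{s ≥ t} inf_{z ∈ S_Φ} sup_{u ∈ [0,T]} ‖z u − X (s+u)‖ ≥ α`. -/
def HypH1 {m : ℕ} {Ω : Type*} [MeasurableSpace Ω] (μ : Measure Ω)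
    (𝓕 : ℝ → MeasurableSpace Ω) (F : Euc m → Set (Euc m)) (X : ℝ → Ω → Euc m) : Prop :=
  ∃ w : ℝ → ℝ → ℝ → ℝ,
    (∀ α > 0, ∀ T > 0, Antitone (fun t => w t α T) ∧ Tendsto (fun t => w t α T) atTop (𝓝 0)) ∧
    ∀ α > 0, ∀ T > 0, ∀ t : ℝ, ∀ᵐ ω ∂μ,
      (μ[Set.indicator {ω' | α ≤ ⨆ s : Ici t, distToSol F (fun u => X ((s : ℝ) + u) ω') T}
          (fun _ => (1:ℝ)) | 𝓕 t]) ω ≤ w t α T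

/-- `F^δ(x) = {y | ∃ z ∈ B(x,δ), dist(y, F z) < δ}`, with the convention `F^0 = F`. -/
def Fdelta {m : ℕ} (F : Euc m → Set (Euc m)) (δ : ℝ) (x : Euc m) : Set (Euc m) :=
  if δ = 0 then F x
  else {y | ∃ z : Euc m, dist z x < δ ∧ Metric.infDist y (F z) < δ}

/-- A `(δ(·), V(·))`-perturbed solution of `dx/dt ∈ F x`. -/
def IsPerturbedSolution {m : ℕ} (F : Euc m → Set (Euc m)) (δ : ℝ → ℝ) (V : ℝ → Euc m)
    (y : ℝ → Euc m) : Prop :=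
  Continuous y ∧ (∀ t > 0, 0 < δ t) ∧ Antitone δ ∧ Tendsto δ atTop (𝓝 0) ∧
  (∀ a b : ℝ, IntervalIntegrable V volume a b) ∧
  (∀ T > 0, Tendsto (fun t => ⨆ u : Icc (0:ℝ) T, ‖∫ r in t..(t + (u : ℝ)), V r‖)
    atTop (𝓝 0)) ∧
  ∃ h : ℝ → Euc m, (∀ a b : ℝ, IntervalIntegrable h volume a b) ∧
    (∀ᵐ t ∂(volume.restrict (Ioi (0:ℝ))), h t - V t ∈ Fdelta F (δ t) (y t)) ∧
    ∀ t ∈ Ici (0:ℝ), y t = y 0 + ∫ u in (0:ℝ)..t, h u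

/-- `Δ(n,T) = sup_{n < k ≤ m(τ_n + T)} ‖∑_{i=n}^{k-1} γ_{i+1} U_{i+1}‖`. -/
def DeltaNT {m : ℕ} {Ω : Type*} (γ : ℕ → ℝ) (U : ℕ → Ω → Euc m) (T : ℝ) (n : ℕ)
    (ω : Ω) : ℝ :=
  ⨆ k : {k : ℕ // n < k ∧ k ≤ mIdx γ (tauOf γ n + T)},
    ‖∑ i ∈ Finset.Ico n (k : ℕ), γ (i + 1) • U (i + 1) ω‖

/-- Condition (bruit2): the conditional probability that `sup_{m ≥ n} Δ(m,T) ≥ ε` is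
dominated by some `w n ε T` decreasing to `0` in `n`. -/
def Bruit2 {m : ℕ} {Ω : Type*} [MeasurableSpace Ω] (μ : Measure Ω)
    (𝓕 : ℕ → MeasurableSpace Ω) (γ : ℕ → ℝ) (U : ℕ → Ω → Euc m) : Prop :=
  ∃ w : ℕ → ℝ → ℝ → ℝ,
    (∀ ε > 0, ∀ T > 0, Antitone (fun n => w n ε T) ∧ Tendsto (fun n => w n ε T) atTop (𝓝 0)) ∧
    ∀ ε > 0, ∀ T > 0, ∀ n : ℕ, ∀ᵐ ω ∂μ,
      (μ[Set.indicator {ω' | ε ≤ ⨆ k : Ici n, DeltaNT γ U T (k : ℕ) ω'}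
          (fun _ => (1:ℝ)) | 𝓕 n]) ω ≤ w n ε T

/-- Topological `limsup` of a sequence of sets: points whose every neighborhood
meets infinitely many of the sets. -/
def setLimsup {X : Type*} [TopologicalSpace X] (A : ℕ → Set X) : Set X :=
  {y | ∀ U ∈ 𝓝 y, {n | (U ∩ A n).Nonempty}.Infinite}

/-- The operator `Λ^δ` on continuous paths `[0,T] → ℝ^m` (with `Λ^0 = Λ`). -/
def LambdaD {m : ℕ} (F : Euc m → Set (Euc m)) (T : ℝ) (hT : 0 ≤ T) (δ : ℝ)
    (z : C(Icc (0:ℝ) T, Euc m)) : Set C(Icc (0:ℝ) T, Euc m) :=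
  {y | ∃ h : ℝ → Euc m, IntervalIntegrable h volume 0 T ∧
    (∀ u : Icc (0:ℝ) T, h u ∈ Fdelta F δ (z u)) ∧
    ∀ τ : Icc (0:ℝ) T, y τ = z ⟨0, Set.left_mem_Icc.mpr hT⟩ + ∫ u in (0:ℝ)..(τ : ℝ), h u}

/-- `Φ^T(M) = closure (⋃_{s ∈ [0,T]} Φ_s(M))`. -/
def PhiTM {m : ℕ} (F : Euc m → Set (Euc m)) (T : ℝ) (M : Set (Euc m)) : Set (Euc m) :=
  closure (⋃ s ∈ Icc (0:ℝ) T, ⋃ x ∈ M, PhiT F s x)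

/-- `‖F‖ = sup_{x ∈ Φ^T(M)} sup_{y ∈ F x} ‖y‖`. -/
def normF {m : ℕ} (F : Euc m → Set (Euc m)) (T : ℝ) (M : Set (Euc m)) : ℝ :=
  sSup {r | ∃ x ∈ PhiTM F T M, ∃ y ∈ F x, r = ‖y‖}

/-- `K_C`: Lipschitz paths with constant `‖F‖ + C + 1` starting in `M`. -/
def KC {m : ℕ} (F : Euc m → Set (Euc m)) (T : ℝ) (hT : 0 ≤ T) (M : Set (Euc m))
    (C : ℝ) : Set C(Icc (0:ℝ) T, Euc m) :=
  {y | (∀ u v : Icc (0:ℝ) T, ‖y u - y v‖ ≤ (normF F T M + C + 1) * |(u : ℝ) - (v : ℝ)|) ∧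
    y ⟨0, Set.left_mem_Icc.mpr hT⟩ ∈ M}

/-- `S_{[0,T]}`: restrictions to `[0,T]` of solutions starting in `M`. -/
def SolRestrict {m : ℕ} (F : Euc m → Set (Euc m)) (T : ℝ) (M : Set (Euc m)) :
    Set C(Icc (0:ℝ) T, Euc m) :=
  {y | ∃ z : ℝ → Euc m, IsSolution F z ∧ z 0 ∈ M ∧ ∀ u : Icc (0:ℝ) T, y u = z u}

/-- A generalised stochastic approximation process relative to `F`. -/
def IsGSAP {m : ℕ} {Ω : Type*} [MeasurableSpace Ω] (μ : Measure Ω)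
    (F : Euc m → Set (Euc m)) (M : Set (Euc m)) (γ : ℕ → ℝ)
    (Fn : ℕ → Euc m → Set (Euc m)) (U : ℕ → Ω → Euc m) (x : ℕ → Ω → Euc m) : Prop :=
  (∀ n, 0 < γ n) ∧
  Tendsto (fun n => ∑ i ∈ Finset.range n, γ (i + 1)) atTop atTop ∧
  Tendsto γ atTop (𝓝 0) ∧
  (∃ C, ∀ n ω, ‖U n ω‖ ≤ C) ∧
  (∀ n ω, x (n + 1) ω - x n ω - γ (n + 1) • U (n + 1) ω ∈ γ (n + 1) • Fn n (x n ω)) ∧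
  (∀ T > 0, ∀ᵐ ω ∂μ, Tendsto
    (fun n => ⨆ k : {k : ℕ // ∑ i ∈ Finset.Ico n k, γ i ≤ T},
      ‖∑ i ∈ Finset.Ico n (k : ℕ), γ (i + 1) • U (i + 1) ω‖) atTop (𝓝 0)) ∧
  (∀ n ω, x n ω ∈ M) ∧
  (∀ δ > 0, ∃ n₀ : ℕ, ∀ n ≥ n₀, ∀ ω, Fn n (x n ω) ⊆ Fdelta F δ (x n ω))

/-!
The map `(δ, x) ↦ F^δ(x)` is upper hemicontinuous at every `(0, x₀)`. Let `z_n → z`, `y_n → y`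
uniformly with `y_n ∈ Λ^{δ_n}(z_n)` and `δ_n → 0`. The slopes of `y_n` are averages of its
velocities, so they lie in every closed convex set containing those velocities. Passing to the
limit, `y` is Lipschitz, and by upper hemicontinuity its slopes at `t` lie in any prescribed
thickening of the convex set `F (z t)` at small scales; hence `y' t ∈ F (z t)` almost everywhere,
that is, `y ∈ Λ(z)`. Applied to `y = z`, this shows that along `δ → 0` limits of almost fixed points
of `Λ^δ` are fixed points of `Λ`, and compactness of `K` makes the statement uniform.
-/

/-! ### Primitives and limits of primitives -/

section Primitive

open scoped NNReal

variable {E : Type*} [NormedAddCommGroup E] [NormedSpace ℝ E]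

/-- On `[a, b]` the curve `y` is the indefinite integral of the integrable velocity `h`. Nothing is
said about `y` outside `[a, b]`. -/
def IsPrimitiveOn (h y : ℝ → E) (a b : ℝ) : Prop :=
  IntervalIntegrable h volume a b ∧ ∀ t ∈ Icc a b, y t = y a + ∫ u in a..t, h u

variable {a b s t : ℝ} {S : Set E}

namespace IsPrimitiveOn

lemma intervalIntegrable {h y : ℝ → E} (hy : IsPrimitiveOn h y a b) (hs : s ∈ Icc a b)
    (ht : t ∈ Icc a b) : IntervalIntegrable h volume s t :=
  hy.1.mono_set (by rw [uIcc_of_le (hs.1.trans hs.2)]; exact uIcc_subset_Icc hs ht)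

lemma sub_eq_integral {h y : ℝ → E} (hy : IsPrimitiveOn h y a b) (hs : s ∈ Icc a b)
    (ht : t ∈ Icc a b) : y t - y s = ∫ u in s..t, h u := by
  have ha : a ∈ Icc a b := left_mem_Icc.2 (hs.1.trans hs.2)
  rw [hy.2 t ht, hy.2 s hs, add_sub_add_left_eq_sub, intervalIntegral.integral_interval_sub_left
    (hy.intervalIntegrable ha ht) (hy.intervalIntegrable ha hs)]

lemma slope_mem [CompleteSpace E] {h y : ℝ → E} (hy : IsPrimitiveOn h y a b) (hS : Convex ℝ S)
    (hSc : IsClosed S) (hs : s ∈ Icc a b) (ht : t ∈ Icc a b) (hst : s < t)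
    (hmem : ∀ u ∈ Ioc s t, h u ∈ S) : slope y s t ∈ S := by
  rw [slope_def_module, hy.sub_eq_integral hs ht, ← interval_average_eq, uIoc_of_le hst.le]
  refine hS.set_average_mem hSc (by simpa using hst) (by simp) ?_ ?_
  · exact (ae_restrict_iff' measurableSet_Ioc).2 (.of_forall hmem)
  · exact (intervalIntegrable_iff_integrableOn_Ioc_of_le hst.le).1 (hy.intervalIntegrable hs ht)

variable [CompleteSpace E] {ι : Type*} {l : Filter ι} [l.NeBot] {h y : ι → ℝ → E} {y₀ : ℝ → E}

lemma slope_mem_of_tendsto (hy : ∀ i, IsPrimitiveOn (h i) (y i) a b)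
    (hlim : ∀ t ∈ Icc a b, Tendsto (y · t) l (𝓝 (y₀ t))) (hS : Convex ℝ S) (hSc : IsClosed S)
    (hs : s ∈ Icc a b) (ht : t ∈ Icc a b) (hst : s ≠ t)
    (hmem : ∀ᶠ i in l, ∀ u ∈ uIcc s t, h i u ∈ S) : slope y₀ s t ∈ S := by
  wlog hlt : s < t generalizing s t
  · rw [slope_comm]
    exact this ht hs hst.symm (by rwa [uIcc_comm]) (hst.lt_or_gt.resolve_left hlt)
  simp only [slope_def_module]
  refine hSc.mem_of_tendsto (((hlim t ht).sub (hlim s hs)).const_smul (t - s)⁻¹) ?_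
  filter_upwards [hmem] with i hi
  rw [← slope_def_module]
  refine (hy i).slope_mem hS hSc hs ht hlt fun u hu => hi u ?_
  rw [uIcc_of_le hlt.le]
  exact Ioc_subset_Icc_self hu

lemma lipschitzOnWith_of_tendsto (hy : ∀ i, IsPrimitiveOn (h i) (y i) a b)
    (hlim : ∀ t ∈ Icc a b, Tendsto (y · t) l (𝓝 (y₀ t))) {R : ℝ≥0}
    (hbound : ∀ᶠ i in l, ∀ u ∈ Icc a b, ‖h i u‖ ≤ R) : LipschitzOnWith R y₀ (Icc a b) := by
  refine LipschitzOnWith.of_dist_le_mul fun s hs t ht => ?_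
  rcases eq_or_ne t s with rfl | hts
  · simp
  have hslope : slope y₀ t s ∈ closedBall (0 : E) R := by
    refine slope_mem_of_tendsto hy hlim (convex_closedBall _ _) isClosed_closedBall ht hs hts ?_
    filter_upwards [hbound] with i hi u hu
    exact mem_closedBall_zero_iff.2 (hi u (uIcc_subset_Icc ht hs hu))
  calc dist (y₀ s) (y₀ t) = ‖(s - t) • slope y₀ t s‖ := by
        rw [sub_smul_slope, dist_eq_norm, vsub_eq_sub]
    _ = ‖slope y₀ t s‖ * dist s t := by rw [norm_smul, mul_comm, dist_eq_norm]
    _ ≤ R * dist s t := by gcongr; exact mem_closedBall_zero_iff.1 hslope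

lemma deriv_mem_of_tendsto (hy : ∀ i, IsPrimitiveOn (h i) (y i) a b)
    (hlim : ∀ t ∈ Icc a b, Tendsto (y · t) l (𝓝 (y₀ t))) (hS : Convex ℝ S) (hSc : IsClosed S)
    (ht : t ∈ Ioo a b) (hdiff : DifferentiableAt ℝ y₀ t)
    (hmem : ∀ η > 0, ∀ᶠ p in l ×ˢ 𝓝 t, h p.1 p.2 ∈ cthickening η S) : deriv y₀ t ∈ S := by
  rw [← hSc.closure_eq, closure_eq_iInter_cthickening]
  refine mem_iInter₂.2 fun η hη => ?_
  obtain ⟨I, hI, V, hV, hIV⟩ := eventually_prod_iff.1 (hmem η hη)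
  obtain ⟨ε, hε, hball⟩ := Metric.mem_nhds_iff.1 (inter_mem hV (Icc_mem_nhds ht.1 ht.2))
  refine isClosed_cthickening.mem_of_tendsto (hasDerivAt_iff_tendsto_slope.1 hdiff.hasDerivAt) ?_
  filter_upwards [self_mem_nhdsWithin, nhdsWithin_le_nhds (ball_mem_nhds t hε)] with s hst hs
  have huIcc : uIcc t s ⊆ ball t ε := by
    rw [← segment_eq_uIcc]
    exact (convex_ball t ε).segment_subset (mem_ball_self hε) hs
  refine slope_mem_of_tendsto hy hlim (hS.cthickening η) isClosed_cthickening
    (Ioo_subset_Icc_self ht) (hball hs).2 (Ne.symm hst) ?_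
  filter_upwards [hI] with i hi u hu
  exact hIV hi (hball (huIcc hu)).1

end IsPrimitiveOn

section LipschitzCurve

variable [FiniteDimensional ℝ E] {C : ℝ≥0} {f : ℝ → E}

lemma ae_differentiableAt_of_lipschitzOnWith_Icc (hf : LipschitzOnWith C f (Icc a b)) :
    ∀ᵐ t, t ∈ Ioo a b → DifferentiableAt ℝ f t := by
  filter_upwards [hf.ae_differentiableWithinAt_of_mem_real] with t hdiff ht
  exact (hdiff (Ioo_subset_Icc_self ht)).differentiableAt (Icc_mem_nhds ht.1 ht.2)

lemma intervalIntegrable_deriv_of_lipschitzOnWith_Icc (hab : a ≤ b)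
    (hf : LipschitzOnWith C f (Icc a b)) : IntervalIntegrable (deriv f) volume a b := by
  rw [intervalIntegrable_iff_integrableOn_Ioo_of_le hab]
  refine Measure.integrableOn_of_bounded (M := C) (by simp) (aestronglyMeasurable_deriv f _) ?_
  exact (ae_restrict_iff' measurableSet_Ioo).2 <| .of_forall fun t ht =>
    norm_deriv_le_of_lipschitzOn (Icc_mem_nhds ht.1 ht.2) hf

lemma integral_deriv_eq_sub_of_lipschitzOnWith_Icc (hab : a ≤ b)
    (hf : LipschitzOnWith C f (Icc a b)) : ∫ u in a..b, deriv f u = f b - f a := by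
  have hint := intervalIntegrable_deriv_of_lipschitzOnWith_Icc hab hf
  refine (SeparatingDual.eq_iff_forall_dual_eq (R := ℝ)).2 fun φ => ?_
  have hφf : AbsolutelyContinuousOnInterval (φ ∘ f) a b :=
    (φ.lipschitz.comp_lipschitzOnWith ((uIcc_of_le hab).symm ▸ hf)).absolutelyContinuousOnInterval
  calc φ (∫ u in a..b, deriv f u) = ∫ u in a..b, φ (deriv f u) :=
        (φ.intervalIntegral_comp_comm hint).symm
    _ = ∫ u in a..b, deriv (φ ∘ f) u := by
        refine intervalIntegral.integral_congr_ae ?_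
        filter_upwards [ae_differentiableAt_of_lipschitzOnWith_Icc hf,
          Measure.ae_ne volume b] with u hdiff hub hu
        rw [uIoc_of_le hab] at hu
        exact (φ.hasFDerivAt.comp_hasDerivAt u
          (hdiff ⟨hu.1, hu.2.lt_of_ne hub⟩).hasDerivAt).deriv.symm
    _ = φ (f b - f a) := by rw [hφf.integral_deriv_eq_sub, map_sub]; rfl

lemma isPrimitiveOn_deriv_of_lipschitzOnWith (hab : a ≤ b) (hf : LipschitzOnWith C f (Icc a b)) :
    IsPrimitiveOn (deriv f) f a b := by
  refine ⟨intervalIntegrable_deriv_of_lipschitzOnWith_Icc hab hf, fun t ht => ?_⟩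
  rw [integral_deriv_eq_sub_of_lipschitzOnWith_Icc ht.1 (hf.mono (Icc_subset_Icc_right ht.2)),
    add_sub_cancel]

end LipschitzCurve

end Primitive

/-! ### The enlargements `F^δ` -/

section Fdelta

variable {m : ℕ} {F : Euc m → Set (Euc m)} {δ : ℝ} {x y : Euc m}

lemma Fdelta_zero (F : Euc m → Set (Euc m)) (x : Euc m) : Fdelta F 0 x = F x := if_pos rfl

lemma mem_Fdelta_of_dist_lt {x' : Euc m} (hx : dist x' x < δ) (hy : y ∈ F x') :
    y ∈ Fdelta F δ x := by
  have hδ : 0 < δ := dist_nonneg.trans_lt hx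
  rw [Fdelta, if_neg hδ.ne']
  exact ⟨x', hx, (infDist_zero_of_mem hy).trans_lt hδ⟩

lemma exists_mem_of_mem_Fdelta (hF : ∀ x, (F x).Nonempty) (hy : y ∈ Fdelta F δ x) :
    ∃ x', dist x' x ≤ δ ∧ ∃ v ∈ F x', dist y v ≤ δ := by
  rcases eq_or_ne δ 0 with rfl | hδ
  · exact ⟨x, (dist_self x).le, y, Fdelta_zero F x ▸ hy, (dist_self y).le⟩
  · rw [Fdelta, if_neg hδ] at hy
    obtain ⟨x', hx', hdist⟩ := hy
    obtain ⟨v, hv, hyv⟩ := (infDist_lt_iff (hF x')).1 hdist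
    exact ⟨x', hx'.le, v, hv, hyv.le⟩

namespace IsStandardSVM

lemma nonempty (hF : IsStandardSVM F) (x : Euc m) : (F x).Nonempty := (hF.1 x).1

lemma isCompact (hF : IsStandardSVM F) (x : Euc m) : IsCompact (F x) := (hF.1 x).2.1

lemma convex (hF : IsStandardSVM F) (x : Euc m) : Convex ℝ (F x) := (hF.1 x).2.2

lemma exists_norm_le_of_mem_Fdelta (hF : IsStandardSVM F) (r : ℝ) :
    ∃ R, ∀ δ ≤ 1, ∀ x, ‖x‖ ≤ r → ∀ y ∈ Fdelta F δ x, ‖y‖ ≤ R := by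
  obtain ⟨c, hc, hgrowth⟩ := hF.2.2
  refine ⟨c * (1 + (r + 1)) + 1, fun δ hδ x hx y hy => ?_⟩
  obtain ⟨x', hx', v, hv, hyv⟩ := exists_mem_of_mem_Fdelta hF.nonempty hy
  have hx'norm : ‖x'‖ ≤ r + 1 := by
    linarith [norm_le_norm_add_norm_sub x x', dist_eq_norm_sub' x' x]
  calc ‖y‖ ≤ ‖v‖ + ‖v - y‖ := norm_le_norm_add_norm_sub v y
    _ ≤ c * (1 + ‖x'‖) + δ := add_le_add (hgrowth x' v hv) (dist_eq_norm_sub' y v ▸ hyv)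
    _ ≤ c * (1 + (r + 1)) + 1 := by gcongr

lemma upperHemicontinuous (hF : IsStandardSVM F) : UpperHemicontinuous F := by
  intro x₀
  obtain ⟨R, hR⟩ := hF.exists_norm_le_of_mem_Fdelta (‖x₀‖ + 1)
  refine UpperHemicontinuousAt.of_sequences (isCompact_closedBall (0 : Euc m) R).isSeqCompact ?_ ?_
  · filter_upwards [continuous_norm.continuousAt.eventually_lt_const (lt_add_one ‖x₀‖)]
      with x hx y hy
    exact mem_closedBall_zero_iff.2 (hR 0 zero_le_one x hx.le y (by rwa [Fdelta_zero]))
  · intro x hx y hy y₀ hy₀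
    exact hF.2.1.mem_of_tendsto (hx.prodMk_nhds hy₀) (.of_forall hy)

lemma eventually_Fdelta_subset_thickening (hF : IsStandardSVM F) (x₀ : Euc m) {η : ℝ}
    (hη : 0 < η) :
    ∀ᶠ p : ℝ × Euc m in 𝓝 (0, x₀), Fdelta F p.1 p.2 ⊆ thickening η (F x₀) := by
  have hF_near : ∀ᶠ x in 𝓝 x₀, F x ⊆ thickening (η / 2) (F x₀) :=
    hF.upperHemicontinuous.forall_isOpen x₀ _ isOpen_thickening
      (self_subset_thickening (half_pos hη) _)
  obtain ⟨ρ, hρ, hFρ⟩ := Metric.eventually_nhds_iff.1 hF_near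
  have hδ : ∀ᶠ p : ℝ × Euc m in 𝓝 (0, x₀), p.1 < min (η / 2) (ρ / 2) :=
    continuousAt_fst.eventually_lt_const (by positivity)
  have hx : ∀ᶠ p : ℝ × Euc m in 𝓝 (0, x₀), dist p.2 x₀ < ρ / 2 :=
    (continuous_snd.tendsto ((0 : ℝ), x₀)).eventually (ball_mem_nhds x₀ (half_pos hρ))
  filter_upwards [hδ, hx] with p hδ hx y hy
  obtain ⟨hδη, hδρ⟩ := lt_min_iff.1 hδ
  obtain ⟨x', hx', v, hv, hyv⟩ := exists_mem_of_mem_Fdelta hF.nonempty hy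
  have hx'₀ : dist x' x₀ < ρ := by linarith [dist_triangle x' p.2 x₀]
  obtain ⟨w, hw, hvw⟩ := mem_thickening_iff.1 (hFρ hx'₀ hv)
  exact mem_thickening_iff.2 ⟨w, hw, by linarith [dist_triangle y v w]⟩

end IsStandardSVM

end Fdelta

/-! ### The operators `Λ^δ` -/

section Lambda

open scoped NNReal

variable {m : ℕ} {F : Euc m → Set (Euc m)} {T δ : ℝ} {hT : 0 ≤ T}
  {y z : C(Icc (0 : ℝ) T, Euc m)}

lemma exists_isPrimitiveOn_of_mem_LambdaD (hy : y ∈ LambdaD F T hT δ z) :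
    y ⟨0, left_mem_Icc.2 hT⟩ = z ⟨0, left_mem_Icc.2 hT⟩ ∧
    ∃ h : ℝ → Euc m, IsPrimitiveOn h (IccExtend hT y) 0 T ∧
      ∀ u : Icc (0 : ℝ) T, h u ∈ Fdelta F δ (z u) := by
  obtain ⟨h, hint, hmem, hyh⟩ := hy
  have hy₀ : y ⟨0, left_mem_Icc.2 hT⟩ = z ⟨0, left_mem_Icc.2 hT⟩ := by simpa using hyh ⟨0, _⟩
  refine ⟨hy₀, h, ⟨hint, fun t ht => ?_⟩, hmem⟩
  rw [IccExtend_left, IccExtend_of_mem hT y ht, hyh, ← hy₀]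

/-- `LambdaD` asks for `h u ∈ F^δ(z u)` at every time; redefining `h` on the exceptional null set
changes no integral. -/
lemma mem_LambdaD_of_ae {h : ℝ → Euc m} (hne : ∀ x, (Fdelta F δ x).Nonempty)
    (hyz : y ⟨0, left_mem_Icc.2 hT⟩ = z ⟨0, left_mem_Icc.2 hT⟩)
    (hy : IsPrimitiveOn h (IccExtend hT y) 0 T)
    (hae : ∀ᵐ t, t ∈ Ioo 0 T → h t ∈ Fdelta F δ (IccExtend hT z t)) :
    y ∈ LambdaD F T hT δ z := by
  classical
  choose f hf using hne
  let g : ℝ → Euc m := fun t =>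
    if h t ∈ Fdelta F δ (IccExtend hT z t) then h t else f (IccExtend hT z t)
  have hg : ∀ t, g t ∈ Fdelta F δ (IccExtend hT z t) := fun t => by
    by_cases ht : h t ∈ Fdelta F δ (IccExtend hT z t)
    · simpa only [g, if_pos ht] using ht
    · simpa only [g, if_neg ht] using hf _
  have hhg : ∀ᵐ t, t ∈ Ioc 0 T → h t = g t := by
    filter_upwards [hae, Measure.ae_ne volume T] with t ht htT htI
    exact (if_pos (ht ⟨htI.1, htI.2.lt_of_ne htT⟩)).symm
  refine ⟨g, hy.1.congr_ae ?_, fun u => by simpa using hg u, fun τ => ?_⟩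
  · rw [uIoc_of_le hT]
    exact (ae_restrict_iff' measurableSet_Ioc).2 hhg
  · have hyτ : y τ = y ⟨0, left_mem_Icc.2 hT⟩ + ∫ u in (0 : ℝ)..τ, h u := by
      simpa using hy.2 τ τ.2
    rw [hyτ, hyz, intervalIntegral.integral_congr_ae]
    filter_upwards [hhg] with t ht htI
    rw [uIoc_of_le τ.2.1] at htI
    exact ht ⟨htI.1, htI.2.trans τ.2.2⟩

namespace IsStandardSVM

lemma nonempty_LambdaD (hF : IsStandardSVM F) (hδ : 0 < δ) :
    (LambdaD F T hT δ z).Nonempty := by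
  choose f hf using hF.nonempty
  have hz : UniformContinuous (IccExtend hT z) :=
    (CompactSpace.uniformContinuous_of_continuous z.continuous).comp
      (LipschitzWith.projIcc hT).uniformContinuous
  obtain ⟨η, hη, hzη⟩ := Metric.uniformContinuous_iff.1 hz δ hδ
  let grid : ℝ → ℝ := fun u => ⌊u / η⌋ * η
  have hgrid : ∀ u, dist (grid u) u < η := fun u => by
    rw [dist_comm, Real.dist_eq, abs_of_nonneg (Int.sub_floor_div_mul_nonneg u hη)]
    exact Int.sub_floor_div_mul_lt u hη
  let h : ℝ → Euc m := fun u => f (IccExtend hT z (grid u))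
  have hmeas : Measurable h :=
    (measurable_from_top (f := fun k : ℤ => f (IccExtend hT z (k * η)))).comp
      (measurable_id.div_const η).floor
  have hbound : ∃ R, ∀ u, ‖h u‖ ≤ R := by
    obtain ⟨R, hR⟩ := hF.exists_norm_le_of_mem_Fdelta ‖z‖
    exact ⟨R, fun u => hR 0 zero_le_one _ (z.norm_coe_le_norm _) _ (Fdelta_zero F _ ▸ hf _)⟩
  obtain ⟨R, hR⟩ := hbound
  have hint : ∀ a b, IntervalIntegrable h volume a b := fun a b =>
    intervalIntegrable_iff.2 <| Measure.integrableOn_of_bounded (by simp [uIoc])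
      hmeas.aestronglyMeasurable (.of_forall hR)
  let y : C(Icc (0 : ℝ) T, Euc m) :=
    ⟨fun τ => z ⟨0, left_mem_Icc.2 hT⟩ + ∫ u in (0 : ℝ)..τ, h u, continuous_const.add
      ((intervalIntegral.continuous_primitive hint 0).comp continuous_subtype_val)⟩
  refine ⟨y, h, hint 0 T, fun u => ?_, fun τ => rfl⟩
  have hzu : dist (IccExtend hT z (grid u)) (z u) < δ := by simpa using hzη (hgrid u)
  exact mem_Fdelta_of_dist_lt hzu (hf _)

variable {ι : Type*} {l : Filter ι} {r : ι → ℝ} {ys zs : ι → C(Icc (0 : ℝ) T, Euc m)}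
  {h : ι → ℝ → Euc m}

lemma eventually_norm_le_of_tendsto (hF : IsStandardSVM F) (hr : Tendsto r l (𝓝 0))
    (hz : Tendsto zs l (𝓝 z)) (hmem : ∀ i (u : Icc (0 : ℝ) T), h i u ∈ Fdelta F (r i) (zs i u)) :
    ∃ R : ℝ≥0, ∀ᶠ i in l, ∀ u ∈ Icc 0 T, ‖h i u‖ ≤ R := by
  obtain ⟨R, hR⟩ := hF.exists_norm_le_of_mem_Fdelta (‖z‖ + 1)
  refine ⟨R.toNNReal, ?_⟩
  filter_upwards [hr.eventually_lt_const one_pos, hz.norm.eventually_lt_const (lt_add_one ‖z‖)]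
    with i hri hzi u hu
  have hzu : ‖zs i ⟨u, hu⟩‖ ≤ ‖z‖ + 1 := ((zs i).norm_coe_le_norm _).trans hzi.le
  exact (hR _ hri.le _ hzu _ (hmem i ⟨u, hu⟩)).trans (Real.le_coe_toNNReal R)

lemma eventually_mem_cthickening_of_tendsto (hF : IsStandardSVM F) (hr : Tendsto r l (𝓝 0))
    (hz : Tendsto zs l (𝓝 z)) (hmem : ∀ i (u : Icc (0 : ℝ) T), h i u ∈ Fdelta F (r i) (zs i u))
    {t : ℝ} (ht : t ∈ Ioo 0 T) {η : ℝ} (hη : 0 < η) :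
    ∀ᶠ p in l ×ˢ 𝓝 t, h p.1 p.2 ∈ cthickening η (F (IccExtend hT z t)) := by
  have hproj : Tendsto (projIcc 0 T hT) (𝓝 t) (𝓝 (projIcc 0 T hT t)) :=
    continuous_projIcc.continuousAt
  have hzs : Tendsto (fun p : ι × ℝ => IccExtend hT (zs p.1) p.2) (l ×ˢ 𝓝 t)
      (𝓝 (IccExtend hT z t)) :=
    (continuous_eval.tendsto (z, projIcc 0 T hT t)).comp ((hz.prodMap hproj).mono_right
      nhds_prod_eq.ge)
  have hFdelta := ((hr.comp tendsto_fst).prodMk_nhds hzs).eventually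
    (hF.eventually_Fdelta_subset_thickening (IccExtend hT z t) hη)
  filter_upwards [hFdelta, tendsto_snd.eventually (Ioo_mem_nhds ht.1 ht.2)] with p hsub hp
  have hp' : p.2 ∈ Icc 0 T := Ioo_subset_Icc_self hp
  refine thickening_subset_cthickening _ _ (hsub ?_)
  simpa only [Function.comp_apply, IccExtend_of_mem hT _ hp'] using hmem p.1 ⟨p.2, hp'⟩

lemma mem_LambdaD_zero_of_tendsto [l.NeBot] (hF : IsStandardSVM F) (hr : Tendsto r l (𝓝 0))
    (hz : Tendsto zs l (𝓝 z)) (hy : Tendsto ys l (𝓝 y))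
    (hmem : ∀ i, ys i ∈ LambdaD F T hT (r i) (zs i)) : y ∈ LambdaD F T hT 0 z := by
  choose hyz h hprim hF_mem using fun i => exists_isPrimitiveOn_of_mem_LambdaD (hmem i)
  have hlim : ∀ t ∈ Icc 0 T, Tendsto (fun i => IccExtend hT (ys i) t) l
      (𝓝 (IccExtend hT y t)) := fun t _ => (continuous_eval_const _).continuousAt.tendsto.comp hy
  have hstart : y ⟨0, left_mem_Icc.2 hT⟩ = z ⟨0, left_mem_Icc.2 hT⟩ :=
    tendsto_nhds_unique ((continuous_eval_const _).continuousAt.tendsto.comp hy)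
      (((continuous_eval_const _).continuousAt.tendsto.comp hz).congr fun i => (hyz i).symm)
  obtain ⟨R, hbound⟩ := hF.eventually_norm_le_of_tendsto hr hz hF_mem
  have hlip := IsPrimitiveOn.lipschitzOnWith_of_tendsto hprim hlim hbound
  refine mem_LambdaD_of_ae (fun x => (Fdelta_zero F x).symm ▸ hF.nonempty x) hstart
    (isPrimitiveOn_deriv_of_lipschitzOnWith hT hlip) ?_
  filter_upwards [ae_differentiableAt_of_lipschitzOnWith_Icc hlip] with t hdiff ht
  rw [Fdelta_zero]
  exact IsPrimitiveOn.deriv_mem_of_tendsto hprim hlim (hF.convex _) (hF.isCompact _).isClosed ht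
    (hdiff ht) fun η hη => hF.eventually_mem_cthickening_of_tendsto hr hz hF_mem ht hη

end IsStandardSVM

end Lambda

lemma exists_forall_infDist_le_imp_exists_dist_lt {X : Type*} [PseudoMetricSpace X] {K : Set X}
    (hK : IsCompact K) {Λ : ℝ → X → Set X} (hne : ∀ r > 0, ∀ z ∈ K, (Λ r z).Nonempty)
    (hlim : ∀ (r : ℕ → ℝ) (z y : ℕ → X) (w : X), Tendsto r atTop (𝓝 0) →
      Tendsto z atTop (𝓝 w) → Tendsto y atTop (𝓝 w) → (∀ n, y n ∈ Λ (r n) (z n)) → w ∈ Λ 0 w)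
    {δ : ℝ} (hδ : 0 < δ) :
    ∃ ε > 0, ∀ r > 0, r < ε → ∀ z ∈ K, infDist z (Λ r z) ≤ ε →
      ∃ w ∈ K, w ∈ Λ 0 w ∧ dist z w < δ := by
  by_contra! hcon
  obtain ⟨ε, -, hε_pos, hε⟩ := exists_seq_strictAnti_tendsto (0 : ℝ)
  choose r hr_pos hr z hzK hzΛ hfar using fun k => hcon (ε k) (hε_pos k)
  choose y hy hzy using fun k => (infDist_lt_iff (hne (r k) (hr_pos k) (z k) (hzK k))).1
    ((hzΛ k).trans_lt (lt_two_mul_self (hε_pos k)))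
  obtain ⟨w, hwK, φ, hφ, hzw⟩ := hK.tendsto_subseq hzK
  have hr0 : Tendsto r atTop (𝓝 0) :=
    squeeze_zero (fun k => (hr_pos k).le) (fun k => (hr k).le) hε
  have hdist : Tendsto (fun k => dist (z k) (y k)) atTop (𝓝 0) :=
    squeeze_zero (fun _ => dist_nonneg) (fun k => (hzy k).le) (by simpa using hε.const_mul 2)
  have hyw : Tendsto (y ∘ φ) atTop (𝓝 w) :=
    (tendsto_iff_of_dist (hdist.comp hφ.tendsto_atTop)).1 hzw
  have hwΛ : w ∈ Λ 0 w :=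
    hlim (r ∘ φ) (z ∘ φ) (y ∘ φ) w (hr0.comp hφ.tendsto_atTop) hzw hyw fun k => hy (φ k)
  obtain ⟨k, hk⟩ := (Metric.tendsto_nhds.1 hzw δ hδ).exists
  exact (hfar (φ k) w hwK hwΛ).not_gt hk

theorem dist_to_fix_of_dist_to_LambdaDelta_general {m : ℕ} {F : Euc m → Set (Euc m)}
    (hF : IsStandardSVM F) {T : ℝ} (hT : 0 ≤ T) {K : Set C(Icc (0 : ℝ) T, Euc m)}
    (hK : IsCompact K) {δ : ℝ} (hδ : 0 < δ) :
    ∃ ε > 0, ∀ r > 0, r < ε → ∀ z ∈ K, infDist z (LambdaD F T hT r z) ≤ ε →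
      ∃ w ∈ K, w ∈ LambdaD F T hT 0 w ∧ dist z w < δ :=
  exists_forall_infDist_le_imp_exists_dist_lt hK (fun _ hr _ _ => hF.nonempty_LambdaD hr)
    (fun _ _ _ _ hr hz hy hmem => hF.mem_LambdaD_zero_of_tendsto hr hz hy hmem) hδ

/-- (Corollary `distancefix`.) Let `δ_n ↓ 0` with `δ_n > 0` and
`Λ_n := Λ^{δ_n}`. If there is a compact `K ⊆ C([0,T], ℝ^m)` with `Λ_n(z) ⊆ K` for all
`z ∈ K` and `Fix(Λ) = {z ∈ K | z ∈ Λ(z)}` is nonempty, then for every `δ > 0` there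
are `ε > 0` and `n₀` with: for all `n > n₀` and `z ∈ K`,
`d_{[0,T]}(z, Λ_n(z)) ≤ ε ⟹ d_{[0,T]}(z, Fix Λ) ≤ δ`. -/
theorem dist_to_fix_of_dist_to_LambdaDelta
    {m : ℕ} (F : Euc m → Set (Euc m)) (hF : IsStandardSVM F)
    (hFbdd : ∃ B : ℝ, ∀ x, ∀ y ∈ F x, ‖y‖ ≤ B)
    (T : ℝ) (hT : 0 < T)
    (δn : ℕ → ℝ) (hδpos : ∀ n, 0 < δn n) (hδanti : Antitone δn)
    (hδ0 : Tendsto δn atTop (𝓝 0))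
    (K : Set C(Icc (0:ℝ) T, Euc m)) (hK : IsCompact K)
    (hmaps : ∀ n : ℕ, ∀ z ∈ K, LambdaD F T hT.le (δn n) z ⊆ K)
    (hFix : {z : C(Icc (0:ℝ) T, Euc m) | z ∈ K ∧ z ∈ LambdaD F T hT.le 0 z}.Nonempty) :
    ∀ δ > 0, ∃ ε > 0, ∃ n₀ : ℕ, ∀ n > n₀, ∀ z ∈ K,
      Metric.infDist z (LambdaD F T hT.le (δn n) z) ≤ ε →
      Metric.infDist z
        {w : C(Icc (0:ℝ) T, Euc m) | w ∈ K ∧ w ∈ LambdaD F T hT.le 0 w} ≤ δ := by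
  intro δ hδ
  obtain ⟨ε, hε, h⟩ := dist_to_fix_of_dist_to_LambdaDelta_general hF hT.le hK hδ
  obtain ⟨n₀, hn₀⟩ := eventually_atTop.1 (hδ0.eventually_lt_const hε)
  refine ⟨ε, hε, n₀, fun n hn z hz hd => ?_⟩
  obtain ⟨w, hwK, hwΛ, hzw⟩ := h (δn n) (hδpos n) (hn₀ n hn.le) z hz hd
  exact le_trans (infDist_le_dist_of_mem ⟨hwK, hwΛ⟩) hzw.le
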